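/- Let T be a satisfiable Horn NAT without fixed letters. Then (i) T has a least model, i.e., a unique minimal model M(T) which satisfies M(T) ≤_{At∖Ab;∅} M for every model M of T; and (ii) there exists a Horn CNF φ(T) that is logically equivalent to T, i.e., has exactly the same models as T. -/

import Mathlib

/-!
STATEMENT 9: a satisfiable Horn NAT without fixed letters has a least model and is
logically equivalent to a Horn CNF.
-/

namespace NestedCirc

universe u
variable {α : Type u}

/-- Propositional formulas over atoms `α`. -/
inductive PForm (α : Type u) : Type u where
  | tru : PForm α
  | fls : PForm α
  | atom : α → PForm α
  | neg : PForm α → PForm α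
  | conj : PForm α → PForm α → PForm α
  | disj : PForm α → PForm α → PForm α

namespace PForm

/-- Satisfaction of a propositional formula in an interpretation (set of true atoms). -/
def sat : PForm α → Set α → Prop
  | tru, _ => True
  | fls, _ => False
  | atom a, M => a ∈ M
  | neg φ, M => ¬ φ.sat M
  | conj φ ψ, M => φ.sat M ∧ ψ.sat M
  | disj φ ψ, M => φ.sat M ∨ ψ.sat M

/-- Implication `φ → ψ`. -/
def imp (φ ψ : PForm α) : PForm α := disj (neg φ) ψ

/-- Equivalence `φ ↔ ψ`. -/
def iffF (φ ψ : PForm α) : PForm α := conj (imp φ ψ) (imp ψ φ)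

/-- The atoms occurring in a formula. -/
def atoms : PForm α → Set α
  | tru => ∅
  | fls => ∅
  | atom a => {a}
  | neg φ => φ.atoms
  | conj φ ψ => φ.atoms ∪ ψ.atoms
  | disj φ ψ => φ.atoms ∪ ψ.atoms

/-- Conjunction of a list of formulas. -/
def conjList (l : List (PForm α)) : PForm α := l.foldr conj tru

end PForm

/-- `M ≤_{P;Z} M'` : `M` agrees with `M'` on the fixed atoms `(P ∪ Z)ᶜ`
and is smaller or equal on the minimized atoms `P`. -/
def lePZ (P Z M M' : Set α) : Prop :=
  M ∩ P ⊆ M' ∩ P ∧ M ∩ (P ∪ Z)ᶜ = M' ∩ (P ∪ Z)ᶜ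

/-- `M <_{P;Z} M'` (strict preference). -/
def ltPZ (P Z M M' : Set α) : Prop := lePZ P Z M M' ∧ ¬ lePZ P Z M' M

/-- A block `{C : B₁,…,Bₘ}` of a nested abnormality theory: the described atoms `C`,
the members that are propositional formulas, and the members that are blocks. -/
inductive Block (α : Type u) : Type u where
  | mk : Set α → List (PForm α) → List (Block α) → Block α

/-- Satisfaction of a block: `M ⊨ {C : B₁,…,Bₘ}` iff some interpretation `M*` agreeing
with `M` outside `Ab` satisfies every member and is `(Ab;C)`-minimal doing so. -/
def Block.sat (Ab : Set α) : Block α → Set α → Prop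
  | .mk C fs bs, M =>
      ∃ Ms : Set α, Ms ∩ Abᶜ = M ∩ Abᶜ ∧
        ((∀ f ∈ fs, f.sat Ms) ∧ ∀ b ∈ bs, Block.sat Ab b Ms) ∧
        ∀ N : Set α, ((∀ f ∈ fs, f.sat N) ∧ ∀ b ∈ bs, Block.sat Ab b N) → ¬ ltPZ Ab C N Ms

/-- A nested abnormality theory (NAT): a finite collection of blocks. -/
abbrev NAT (α : Type u) := List (Block α)

/-- `M ⊨ T` iff `M` satisfies every block of `T`. -/
def NAT.sat (Ab : Set α) (T : NAT α) (M : Set α) : Prop := ∀ B ∈ T, Block.sat Ab B M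

/-- `φ` is a clause: a disjunction of literals (with `fls` for the empty clause). -/
def PForm.IsClause : PForm α → Prop
  | .fls => True
  | .atom _ => True
  | .neg (.atom _) => True
  | .disj φ ψ => φ.IsClause ∧ ψ.IsClause
  | _ => False

/-- The number of positive literals of a clause. -/
def PForm.posCount : PForm α → ℕ
  | .atom _ => 1
  | .disj φ ψ => φ.posCount + ψ.posCount
  | _ => 0

/-- A Horn clause: a clause with at most one positive literal. -/
def PForm.IsHornClause (φ : PForm α) : Prop := φ.IsClause ∧ φ.posCount ≤ 1

/-- A Horn CNF: a conjunction of Horn clauses. -/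
def PForm.IsHornCNF : PForm α → Prop
  | .tru => True
  | .conj φ ψ => φ.IsHornCNF ∧ ψ.IsHornCNF
  | φ => φ.IsHornClause

/-- A Horn block: every propositional member is a Horn CNF and every block member is
recursively Horn. -/
inductive Block.IsHorn : Block α → Prop where
  | mk {C : Set α} {fs : List (PForm α)} {bs : List (Block α)} :
      (∀ f ∈ fs, f.IsHornCNF) → (∀ b ∈ bs, b.IsHorn) → Block.IsHorn (.mk C fs bs)

/-- A block (recursively) without fixed letters: the described atoms of every block
occurring in it are all of `At ∖ Ab`. -/
inductive Block.NoFixed (Ab : Set α) : Block α → Prop where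
  | mk {C : Set α} {fs : List (PForm α)} {bs : List (Block α)} :
      C = Abᶜ → (∀ b ∈ bs, b.NoFixed Ab) → Block.NoFixed Ab (.mk C fs bs)

theorem clause_anti : ∀ (φ : PForm α), φ.IsClause → φ.posCount = 0 →
    ∀ {M N : Set α}, N ⊆ M → φ.sat M → φ.sat N := by
  intro φ
  induction φ with
  | tru => intro h; simp [PForm.IsClause] at h
  | fls => intro _ _ M N _ h; exact h
  | atom a => intro _ h; simp [PForm.posCount] at h
  | neg φ ih =>
    intro h _ M N hs hm
    cases φ with
    | atom a => exact fun ha => hm (hs ha)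
    | _ => simp [PForm.IsClause] at h
  | conj φ ψ _ _ => intro h; simp [PForm.IsClause] at h
  | disj φ ψ ih1 ih2 =>
    intro h h0 M N hs hm
    simp only [PForm.IsClause] at h
    simp only [PForm.posCount] at h0
    rcases hm with hm | hm
    · exact Or.inl (ih1 h.1 (by omega) hs hm)
    · exact Or.inr (ih2 h.2 (by omega) hs hm)

theorem clause_sInter : ∀ (φ : PForm α), φ.IsClause → φ.posCount ≤ 1 →
    ∀ {S : Set (Set α)}, S.Nonempty → (∀ M ∈ S, φ.sat M) → φ.sat (⋂₀ S) := by
  intro φ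
  induction φ with
  | tru => intro h; simp [PForm.IsClause] at h
  | fls => intro _ _ S ⟨M, hM⟩ h; exact h M hM
  | atom a => intro _ _ S _ h; exact h
  | neg φ ih =>
    intro h _ S ⟨M, hM⟩ hm
    cases φ with
    | atom a => exact fun ha => hm M hM (ha M hM)
    | _ => simp [PForm.IsClause] at h
  | conj φ ψ _ _ => intro h; simp [PForm.IsClause] at h
  | disj φ ψ ih1 ih2 =>
    intro h h0 S hS hm
    simp only [PForm.IsClause] at h
    simp only [PForm.posCount] at h0
    have key : φ.posCount = 0 ∨ ψ.posCount = 0 := by omega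
    rcases key with k | k
    · by_cases e : ∃ M ∈ S, φ.sat M
      · obtain ⟨M, hM, e⟩ := e
        exact Or.inl (clause_anti φ h.1 k (Set.sInter_subset_of_mem hM) e)
      · exact Or.inr (ih2 h.2 (by omega) hS
          fun M hM => (hm M hM).resolve_left fun q => e ⟨M, hM, q⟩)
    · by_cases e : ∃ M ∈ S, ψ.sat M
      · obtain ⟨M, hM, e⟩ := e
        exact Or.inr (clause_anti ψ h.2 k (Set.sInter_subset_of_mem hM) e)
      · exact Or.inl (ih1 h.1 (by omega) hS
          fun M hM => (hm M hM).resolve_right fun q => e ⟨M, hM, q⟩)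

theorem hornCNF_ind {P : PForm α → Prop} (ht : P .tru)
    (hc : ∀ φ ψ, P φ → P ψ → P (.conj φ ψ))
    (hcl : ∀ φ : PForm α, φ.IsClause → φ.posCount ≤ 1 → P φ) :
    ∀ φ : PForm α, φ.IsHornCNF → P φ := by
  intro φ
  induction φ with
  | tru => intro _; exact ht
  | conj φ ψ ih1 ih2 =>
    intro h
    simp only [PForm.IsHornCNF] at h
    exact hc _ _ (ih1 h.1) (ih2 h.2)
  | _ =>
    intro h
    simp only [PForm.IsHornCNF, PForm.IsHornClause] at h
    exact hcl _ h.1 h.2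

theorem horn_sInter (φ : PForm α) (h : φ.IsHornCNF) :
    ∀ {S : Set (Set α)}, S.Nonempty → (∀ M ∈ S, φ.sat M) → φ.sat (⋂₀ S) := by
  refine hornCNF_ind (P := fun φ => ∀ {S : Set (Set α)}, S.Nonempty →
    (∀ M ∈ S, φ.sat M) → φ.sat (⋂₀ S)) ?_ ?_ ?_ φ h
  · intro S _ _; trivial
  · intro φ ψ h1 h2 S hS hm
    exact ⟨h1 hS fun M hM => (hm M hM).1, h2 hS fun M hM => (hm M hM).2⟩
  · intro φ h1 h2 S hS hm
    exact clause_sInter φ h1 h2 hS hm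

theorem clause_cnf : ∀ (φ : PForm α), φ.IsClause → φ.posCount ≤ 1 → φ.IsHornCNF := by
  intro φ h1 h2
  cases φ with
  | tru => simp [PForm.IsHornCNF]
  | conj φ ψ => simp [PForm.IsClause] at h1
  | _ => simp only [PForm.IsHornCNF, PForm.IsHornClause]; exact ⟨h1, h2⟩

theorem clause_subst (Ab K : Set α) : ∀ (φ : PForm α), φ.IsClause →
    ∃ ψ : PForm α, (ψ = .tru ∨ (ψ.IsClause ∧ ψ.posCount ≤ φ.posCount)) ∧
      ∀ M : Set α, ψ.sat M ↔ φ.sat ((M ∩ Abᶜ) ∪ (K ∩ Ab)) := by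
  intro φ
  induction φ with
  | tru => intro h; simp [PForm.IsClause] at h
  | fls => intro h; exact ⟨.fls, Or.inr ⟨h, le_rfl⟩, fun M => Iff.rfl⟩
  | atom a =>
    intro h
    by_cases ha : a ∈ Ab
    · by_cases hk : a ∈ K
      · exact ⟨.tru, Or.inl rfl, fun M => by simp [PForm.sat, ha, hk]⟩
      · exact ⟨.fls, Or.inr (by simp [PForm.IsClause, PForm.posCount]),
          fun M => by simp [PForm.sat, ha, hk]⟩
    · exact ⟨.atom a, Or.inr ⟨h, le_rfl⟩, fun M => by simp [PForm.sat, ha]⟩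
  | neg φ ih =>
    intro h
    cases φ with
    | atom a =>
      by_cases ha : a ∈ Ab
      · by_cases hk : a ∈ K
        · exact ⟨.fls, Or.inr (by simp [PForm.IsClause, PForm.posCount]),
            fun M => by simp [PForm.sat, ha, hk]⟩
        · exact ⟨.tru, Or.inl rfl, fun M => by simp [PForm.sat, ha, hk]⟩
      · exact ⟨.neg (.atom a), Or.inr ⟨h, le_rfl⟩, fun M => by simp [PForm.sat, ha]⟩
    | _ => simp [PForm.IsClause] at h
  | conj φ ψ _ _ => intro h; simp [PForm.IsClause] at h
  | disj φ ψ ih1 ih2 =>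
    intro h
    simp only [PForm.IsClause] at h
    obtain ⟨φ', h1, e1⟩ := ih1 h.1
    obtain ⟨ψ', h2, e2⟩ := ih2 h.2
    rcases h1 with rfl | h1
    · exact ⟨.tru, Or.inl rfl, fun M => ⟨fun q => Or.inl ((e1 M).1 q), fun _ => trivial⟩⟩
    rcases h2 with rfl | h2
    · exact ⟨.tru, Or.inl rfl, fun M => ⟨fun q => Or.inr ((e2 M).1 q), fun _ => trivial⟩⟩
    refine ⟨.disj φ' ψ', Or.inr ⟨?_, ?_⟩, fun M => or_congr (e1 M) (e2 M)⟩
    · simp only [PForm.IsClause]; exact ⟨h1.1, h2.1⟩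
    · simp only [PForm.posCount]; omega

theorem horn_subst (Ab K : Set α) (φ : PForm α) (h : φ.IsHornCNF) :
    ∃ ψ : PForm α, ψ.IsHornCNF ∧
      ∀ M : Set α, ψ.sat M ↔ φ.sat ((M ∩ Abᶜ) ∪ (K ∩ Ab)) := by
  refine hornCNF_ind (P := fun φ => ∃ ψ : PForm α, ψ.IsHornCNF ∧
      ∀ M : Set α, ψ.sat M ↔ φ.sat ((M ∩ Abᶜ) ∪ (K ∩ Ab))) ?_ ?_ ?_ φ h
  · exact ⟨.tru, by simp [PForm.IsHornCNF], fun M => Iff.rfl⟩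
  · rintro φ ψ ⟨φ', h1, e1⟩ ⟨ψ', h2, e2⟩
    exact ⟨.conj φ' ψ', by simp only [PForm.IsHornCNF]; exact ⟨h1, h2⟩,
      fun M => and_congr (e1 M) (e2 M)⟩
  · intro φ h1 h2
    obtain ⟨ψ, h3, e⟩ := clause_subst Ab K φ h1
    refine ⟨ψ, ?_, e⟩
    rcases h3 with rfl | h3
    · simp [PForm.IsHornCNF]
    · exact clause_cnf ψ h3.1 (h3.2.trans h2)

theorem horn_list {β : Type*} (s : β → Set α → Prop) (l : List β)
    (h : ∀ b ∈ l, ∃ φ : PForm α, φ.IsHornCNF ∧ ∀ M : Set α, φ.sat M ↔ s b M) :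
    ∃ φ : PForm α, φ.IsHornCNF ∧ ∀ M : Set α, φ.sat M ↔ ∀ b ∈ l, s b M := by
  induction l with
  | nil => exact ⟨.tru, by simp [PForm.IsHornCNF], fun M => by simp [PForm.sat]⟩
  | cons b l ih =>
    obtain ⟨φ, h1, e1⟩ := h b (by simp)
    obtain ⟨ψ, h2, e2⟩ := ih fun c hc => h c (by simp [hc])
    exact ⟨.conj φ ψ, by simp only [PForm.IsHornCNF]; exact ⟨h1, h2⟩,
      fun M => by simp [PForm.sat, e1, e2]⟩

theorem horn_block (Ab : Set α) (B : Block α) (h : B.IsHorn) : B.NoFixed Ab →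
    ∃ φ : PForm α, φ.IsHornCNF ∧ ∀ M : Set α, φ.sat M ↔ Block.sat Ab B M := by
  induction h with
  | @mk C fs bs hf hb ih =>
    intro hN
    cases hN with
    | mk hC hbs =>
    subst hC
    obtain ⟨φ₁, c1, e1⟩ := horn_list (fun f M => PForm.sat f M) fs
      fun f hfm => ⟨f, hf f hfm, fun M => Iff.rfl⟩
    obtain ⟨φ₂, c2, e2⟩ := horn_list (fun b M => Block.sat Ab b M) bs
      fun b hbm => ih b hbm (hbs b hbm)
    obtain ⟨φ, c, e⟩ : ∃ φ : PForm α, φ.IsHornCNF ∧ ∀ M : Set α, φ.sat M ↔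
        ((∀ f ∈ fs, f.sat M) ∧ ∀ b ∈ bs, Block.sat Ab b M) :=
      ⟨.conj φ₁ φ₂, by simp only [PForm.IsHornCNF]; exact ⟨c1, c2⟩,
        fun M => and_congr (e1 M) (e2 M)⟩
    simp only [Block.sat, ← e]
    by_cases hs : ∃ M, φ.sat M
    · have hK : φ.sat (⋂₀ {M | φ.sat M}) := horn_sInter φ c hs fun M hM => hM
      have hle : ∀ M, φ.sat M → ⋂₀ {M | φ.sat M} ⊆ M := fun M hM =>
        Set.sInter_subset_of_mem hM
      generalize ⋂₀ {M | φ.sat M} = K at hK hle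
      obtain ⟨ψ, d, hψ⟩ := horn_subst Ab K φ c
      refine ⟨ψ, d, fun M => ?_⟩
      rw [hψ]
      constructor
      · intro hM
        refine ⟨_, ?_, hM, ?_⟩
        · ext x; by_cases hx : x ∈ Ab <;> simp [hx]
        · intro N hNs hlt
          apply hlt.2
          refine ⟨?_, by simp⟩
          rintro x ⟨hx, hxA⟩
          rcases hx with hx | hx
          · exact absurd hxA hx.2
          · exact ⟨hle N hNs hx.1, hxA⟩
      · rintro ⟨Ms, hag, hsat, hmin⟩
        have h1 : Ms ∩ Ab ⊆ K ∩ Ab := by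
          by_contra hcon
          apply hmin K hK
          refine ⟨⟨fun x hx => ⟨hle Ms hsat hx.1, hx.2⟩, by simp⟩, fun q => hcon q.1⟩
        have h2 : K ∩ Ab = Ms ∩ Ab :=
          Set.Subset.antisymm (fun x hx => ⟨hle Ms hsat hx.1, hx.2⟩) h1
        rw [← hag, h2, Set.union_comm, Set.inter_union_compl]
        exact hsat
    · refine ⟨.fls, by simp [PForm.IsHornCNF, PForm.IsHornClause, PForm.IsClause,
        PForm.posCount], fun M => ⟨fun q => q.elim, ?_⟩⟩
      rintro ⟨Ms, _, hsat, _⟩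
      exact hs ⟨Ms, hsat⟩

/-- Let `T` be a satisfiable Horn NAT without fixed letters.  Then
(i) `T` has a least model `M(T)`: a (unique minimal) model that is below every model
of `T` on the letters `At ∖ Ab` (`M(T) ≤_{At∖Ab;∅} M` for every model `M` of `T`);
and (ii) there exists a Horn CNF `φ(T)` logically equivalent to `T`, i.e., with
exactly the same models as `T`. -/
theorem horn_nat_no_fixed_least_model_and_horn_cnf (Ab : Set α) (T : NAT α)
    (hHorn : ∀ B ∈ T, B.IsHorn) (hNoFixed : ∀ B ∈ T, B.NoFixed Ab)
    (hSat : ∃ M : Set α, NAT.sat Ab T M) :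
    (∃ Mmin : Set α, NAT.sat Ab T Mmin ∧
        ∀ M : Set α, NAT.sat Ab T M → Mmin ∩ Abᶜ ⊆ M ∩ Abᶜ) ∧
    (∃ φ : PForm α, φ.IsHornCNF ∧ ∀ M : Set α, φ.sat M ↔ NAT.sat Ab T M) := by
  obtain ⟨φ, c, e⟩ := horn_list (fun b M => Block.sat Ab b M) T
    fun b hb => horn_block Ab b (hHorn b hb) (hNoFixed b hb)
  have e' : ∀ M : Set α, φ.sat M ↔ NAT.sat Ab T M := e
  refine ⟨⟨⋂₀ {M | φ.sat M}, ?_, ?_⟩, φ, c, e'⟩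
  · obtain ⟨M, hM⟩ := hSat
    exact (e' _).1 (horn_sInter φ c ⟨M, (e' M).2 hM⟩ fun M hM => hM)
  · intro M hM x hx
    exact ⟨hx.1 M ((e' M).2 hM), hx.2⟩


end NestedCirc
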